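/- The Thomas division is an involutive division on ℕ^n: for every finite nonempty set U ⊆ ℕ^n, define u ∣_T^U m (for u ∈ U, m ∈ ℕ^n) to hold iff m = u + m' for some m' ∈ ℕ^n such that for every index i with m'ᵢ > 0 one has uᵢ = max{u'ᵢ : u' ∈ U}. Then the relations ∣_T^U satisfy axioms (a)–(f) of an involutive division. -/

import Mathlib

/-!
The Thomas division is decided coordinatewise: `u` divides `m` iff in each coordinate either
`m i = u i`, or `u i ≤ m i` and `u i` is the maximum of the `i`-th coordinates over `U`
(`thomasDiv_iff`). Axioms (a), (b), (c) are immediate from this. For (d) and (e), the point is that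
an element of `U` can never strictly exceed that maximum: hence `u ∣ u'` with `u' ∈ U` forces
`u = u'`, and two elements of `U` with a common Thomas multiple coincide. For (f), shrinking `U` to
a subset containing `v` keeps `v i` maximal wherever it was.
-/

/-- The Thomas division on multi-indices in `ℕ^n`: for a finite (nonempty) set `U`,
`u ∣_T^U m` iff `m = u + m'` for some `m'` such that every index `i` with `m'ᵢ > 0`
satisfies `uᵢ = max{u'ᵢ : u' ∈ U}`. -/
def thomasDiv {n : ℕ} (U : Finset (Fin n → ℕ)) (u m : Fin n → ℕ) : Prop :=
  ∃ m' : Fin n → ℕ, m = u + m' ∧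
    ∀ i : Fin n, m' i ≠ 0 → u i = U.sup (fun w => w i)

theorem thomasDiv_iff {n : ℕ} (U : Finset (Fin n → ℕ)) (u m : Fin n → ℕ) :
    thomasDiv U u m ↔ ∀ i, m i = u i ∨ (u i ≤ m i ∧ u i = U.sup (fun w => w i)) := by
  constructor
  · rintro ⟨d, rfl, hd⟩ i
    by_cases h : d i = 0
    · left; simp [h]
    · right; exact ⟨by simp, hd i h⟩
  · intro h
    refine ⟨fun i => m i - u i, ?_, ?_⟩
    · funext i
      have := h i
      simp only [Pi.add_apply]
      omega
    · intro i hi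
      have := h i
      dsimp only at hi
      omega

theorem le_sup_coord {n : ℕ} {U : Finset (Fin n → ℕ)} {u : Fin n → ℕ} (hu : u ∈ U) (i : Fin n) :
    u i ≤ U.sup (fun w => w i) :=
  Finset.le_sup (f := fun w : Fin n → ℕ => w i) hu

/-- The Thomas division is an involutive division on `ℕ^n`: for every
finite nonempty set `U ⊆ ℕ^n`, the relations `∣_T^U` satisfy axioms (a)–(f) of an
involutive division. -/
theorem thomas_division_is_involutive (n : ℕ) :
    -- (a) `u ∣_T^U m` implies `u` divides `m` (componentwise `≤`)
    (∀ U : Finset (Fin n → ℕ), U.Nonempty → ∀ u ∈ U, ∀ m,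
      thomasDiv U u m → ∀ i, u i ≤ m i) ∧
    -- (b) `u ∣_T^U u`
    (∀ U : Finset (Fin n → ℕ), U.Nonempty → ∀ u ∈ U, thomasDiv U u u) ∧
    -- (c) `u ∣_T^U (u+m)` and `u ∣_T^U (u+m')` iff `u ∣_T^U (u+m+m')`
    (∀ U : Finset (Fin n → ℕ), U.Nonempty → ∀ u ∈ U, ∀ m m' : Fin n → ℕ,
      (thomasDiv U u (u + m) ∧ thomasDiv U u (u + m')) ↔ thomasDiv U u (u + m + m')) ∧
    -- (d) `u ∣_T^U m` and `u' ∣_T^U m` imply `u ∣_T^U u'` or `u' ∣_T^U u`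
    (∀ U : Finset (Fin n → ℕ), U.Nonempty → ∀ u ∈ U, ∀ u' ∈ U, ∀ m,
      thomasDiv U u m → thomasDiv U u' m → thomasDiv U u u' ∨ thomasDiv U u' u) ∧
    -- (e) `u ∣_T^U u'` and `u' ∣_T^U m` imply `u ∣_T^U m`
    (∀ U : Finset (Fin n → ℕ), U.Nonempty → ∀ u ∈ U, ∀ u' ∈ U, ∀ m,
      thomasDiv U u u' → thomasDiv U u' m → thomasDiv U u m) ∧
    -- (f) for every `V ⊆ U` and `v ∈ V`, `v ∣_T^U m` implies `v ∣_T^V m`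
    (∀ U V : Finset (Fin n → ℕ), U.Nonempty → V ⊆ U → ∀ v ∈ V, ∀ m,
      thomasDiv U v m → thomasDiv V v m) := by
  simp only [thomasDiv_iff, Pi.add_apply]
  refine ⟨?_, ?_, ?_, ?_, ?_, ?_⟩
  · intro U _ u _ m h i
    have := h i
    omega
  · intro U _ u _ i
    simp
  · intro U _ u _ m m'
    rw [← forall_and]
    refine forall_congr' fun i => ?_
    omega
  · intro U _ u hu u' hu' m h h'
    left
    intro i
    -- In fact `u` and its counterpart coincide, so either alternative holds.
    have := h i
    have := h' i
    have := le_sup_coord hu i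
    have := le_sup_coord hu' i
    omega
  · intro U _ u _ u' hu' m h h' i
    have := h i
    have := h' i
    have := le_sup_coord hu' i
    omega
  · intro U V _ hVU v hv m h i
    have := h i
    have := le_sup_coord hv i
    have : V.sup (fun w => w i) ≤ U.sup (fun w => w i) := Finset.sup_mono hVU
    omega
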